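/- Let q be a prime power and let r, δ, M, N be positive integers with δ > 1 and q ≥ N > M > 1. Let C_1 = ⋯ = C_{M-1} be [r+δ-1, r, δ]_q MDS codes, let g be an integer with 0 ≤ g ≤ δ/(N-M+1) and g < r, and let C_M be an [r+δ-1, r-g, δ+g]_q MDS code with C_M ⊆ C_1. Let C = (C_1,...,C_M)·A be the matrix-product code, where A is an M×N NSC matrix over F_q. Then C is an optimal (r,δ)-LRC if and only if r = g + 1. -/

import Mathlib

namespace LRCPaper

noncomputable section Defs

variable {F : Type} [Field F] [Fintype F] [DecidableEq F]

/-- The punctured code of `C` on the coordinate set `S`: delete all coordinates outside `S`. -/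
def punctureCode {ι : Type} [Fintype ι] (C : Submodule F (ι → F)) (S : Finset ι) :
    Submodule F ({ x // x ∈ S } → F) :=
  C.map (LinearMap.funLeft F F (fun j : { x // x ∈ S } => (j : ι)))

/-- Every nonzero codeword of `C` has Hamming weight at least `δ`
(i.e. the minimum distance of `C` is at least `δ`). -/
def minWtGe {ι : Type} [Fintype ι] (C : Submodule F (ι → F)) (δ : ℕ) : Prop :=
  ∀ c ∈ C, c ≠ 0 → δ ≤ hammingNorm c

/-- The minimum Hamming distance of the linear code `C` is exactly `d`. -/
def minDistIs {ι : Type} [Fintype ι] (C : Submodule F (ι → F)) (d : ℕ) : Prop :=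
  (∃ c ∈ C, c ≠ 0 ∧ hammingNorm c = d) ∧ minWtGe C d

/-- The `i`-th code symbol of `C` has `(r, δ)`-locality. -/
def symbolHasLocality {ι : Type} [Fintype ι] (C : Submodule F (ι → F)) (r δ : ℕ) (i : ι) :
    Prop :=
  ∃ S : Finset ι, i ∈ S ∧ S.card ≤ r + δ - 1 ∧ minWtGe (punctureCode C S) δ

/-- `C` is an `(r, δ)`-locally repairable code. -/
def IsLRC {ι : Type} [Fintype ι] (C : Submodule F (ι → F)) (r δ : ℕ) : Prop :=
  ∀ i : ι, symbolHasLocality C r δ i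

/-- The right-hand side `n - k + 1 - (⌈k/r⌉ - 1)(δ - 1)` of the Singleton-type bound
for `(r, δ)`-LRCs, as an integer. -/
def optBound (n k r δ : ℕ) : ℤ :=
  (n : ℤ) - (k : ℤ) + 1 - (⌈(k : ℚ) / (r : ℚ)⌉ - 1) * ((δ : ℤ) - 1)

/-- `C` is an optimal `(r, δ)`-LRC with parameters `[card ι, k, d]`. -/
def IsOptimalLRC {ι : Type} [Fintype ι] (C : Submodule F (ι → F)) (k d r δ : ℕ) : Prop :=
  IsLRC C r δ ∧ Module.finrank F ↥C = k ∧ minDistIs C d ∧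
    (d : ℤ) = optBound (Fintype.card ι) k r δ

/-- `C` is an optimal `(r, δ)`-LRC (its minimum distance meets the Singleton-type bound). -/
def IsOptimalLRCCode {ι : Type} [Fintype ι] (C : Submodule F (ι → F)) (r δ : ℕ) : Prop :=
  IsLRC C r δ ∧ ∃ d : ℕ, minDistIs C d ∧
    (d : ℤ) = optBound (Fintype.card ι) (Module.finrank F ↥C) r δ

/-- The linear map underlying the matrix-product construction: it sends
`(c_1, …, c_M)` to `(∑_ℓ c_ℓ a_{ℓ,1}, …, ∑_ℓ c_ℓ a_{ℓ,N})`. -/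
def mpMap {ι : Type} [Fintype ι] {M N : ℕ} (A : Matrix (Fin M) (Fin N) F) :
    (Fin M → ι → F) →ₗ[F] (Fin N × ι → F) where
  toFun c := fun p => ∑ ℓ : Fin M, c ℓ p.2 * A ℓ p.1
  map_add' x y := by
    funext p
    simp [add_mul, Finset.sum_add_distrib]
  map_smul' a x := by
    funext p
    simp [Finset.mul_sum, mul_assoc]

/-- The matrix-product code `(C_1, …, C_M) · A`, a linear code of length `N * card ι`
with coordinates indexed by `Fin N × ι`. -/
def matrixProductCode {ι : Type} [Fintype ι] {M N : ℕ}
    (Cs : Fin M → Submodule F (ι → F)) (A : Matrix (Fin M) (Fin N) F) :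
    Submodule F (Fin N × ι → F) :=
  (Submodule.pi Set.univ Cs).map (mpMap A)

/-- The linear code of length `N` generated by the first `i` rows of `A`. -/
def rowSpanCode {M N : ℕ} (A : Matrix (Fin M) (Fin N) F) (i : ℕ) :
    Submodule F (Fin N → F) :=
  Submodule.span F {w : Fin N → F | ∃ ℓ : Fin M, (ℓ : ℕ) < i ∧ w = A ℓ}

/-- `A` is nonsingular by columns (NSC): for every `i ≤ M`, every `i × i` submatrix
formed by choosing `i` columns of the first `i` rows of `A` is nonsingular. -/
def IsNSC {M N : ℕ} (A : Matrix (Fin M) (Fin N) F) : Prop :=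
  ∀ (i : ℕ) (hi : i ≤ M) (f : Fin i → Fin N), StrictMono f →
    (Matrix.of fun a b : Fin i => A (Fin.castLE hi a) (f b)).det ≠ 0

/-- Evaluation map underlying generalized Reed–Solomon codes:
`p ↦ (v_1 p(a_1), …, v_n p(a_n))`. -/
def grsMap {n : ℕ} (a v : Fin n → F) : Polynomial F →ₗ[F] (Fin n → F) where
  toFun p := fun i => v i * Polynomial.eval (a i) p
  map_add' p q := by funext i; simp [mul_add]
  map_smul' c p := by funext i; simp [mul_left_comm]

/-- The generalized Reed–Solomon code `GRS_k(a, v)`. -/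
def GRSCode {n : ℕ} (k : ℕ) (a v : Fin n → F) : Submodule F (Fin n → F) :=
  (Polynomial.degreeLT F k).map (grsMap a v)

/-- The set of indices of nonzero columns of `H`. -/
def colSupport {m n : ℕ} (H : Matrix (Fin m) (Fin n) F) : Finset (Fin n) :=
  Finset.univ.filter fun j => ∃ i, H i j ≠ 0

/-- Entry `(i, j)` (0-based) of the `2(δ-1) × (2m-1)` matrix `Ĥ`, built from the distinct
elements `α 0, …, α (m-1)` and nonzero scalars `lam 0, …, lam (m-1)`. -/
def hatEntry (δ m : ℕ) (α lam : ℕ → F) (i j : ℕ) : F :=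
  if i < δ - 1 then (if j < m then lam j * α j ^ i else 0)
  else (if m - 1 ≤ j then lam (2 * m - 2 - j) * α (2 * m - 2 - j) ^ (i - (δ - 1)) else 0)

/-- Entry `(i, j)` (0-based) of the `v(δ-1) × (vm-1)` block-diagonal matrix
`ℋ = H ⊕ ⋯ ⊕ H ⊕ Ĥ` (`v - 2` diagonal copies of `H` followed by `Ĥ`). -/
def calHEntry (δ m v : ℕ) (α lam : ℕ → F) (i j : ℕ) : F :=
  if i < (v - 2) * (δ - 1) then
    (if j < (v - 2) * m ∧ j / m = i / (δ - 1) then lam (j % m) * α (j % m) ^ (i % (δ - 1))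
      else 0)
  else
    (if (v - 2) * m ≤ j then hatEntry δ m α lam (i - (v - 2) * (δ - 1)) (j - (v - 2) * m)
      else 0)

/-- Entry `(i, j)` (0-based) of the `(v(δ-1)+τ) × (vm-1)` matrix `H̃`, obtained by appending
the row block `(A, …, A, Â)` below `ℋ`. -/
def tildeHEntry (δ m v : ℕ) (α lam : ℕ → F) (i j : ℕ) : F :=
  if i < v * (δ - 1) then calHEntry δ m v α lam i j
  else
    lam (if j < (v - 2) * m then j % m
          else (if j - (v - 2) * m < m then j - (v - 2) * m
                else 2 * m - 2 - (j - (v - 2) * m))) *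
      α (if j < (v - 2) * m then j % m
          else (if j - (v - 2) * m < m then j - (v - 2) * m
                else 2 * m - 2 - (j - (v - 2) * m))) ^
        ((δ - 1) + (i - v * (δ - 1)))

end Defs
theorem nsc_weight {F : Type} [Field F] [Fintype F] [DecidableEq F] {M N : ℕ}
    (A : Matrix (Fin M) (Fin N) F) (hA : IsNSC A) (v : Fin M → F) (m : Fin M)
    (hm : v m ≠ 0) (hv : ∀ l, m < l → v l = 0) :
    N ≤ hammingNorm (fun j : Fin N => ∑ l, v l * A l j) + m := by
  set w : Fin N → F := fun j : Fin N => ∑ l, v l * A l j with hw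
  have hsplit : hammingNorm w + (Finset.univ.filter (fun j => ¬ (w j ≠ 0))).card = N := by
    unfold hammingNorm
    rw [Finset.card_filter_add_card_filter_not]
    simp
  by_contra hcon
  have hZ : (m : ℕ) + 1 ≤ (Finset.univ.filter (fun j => ¬ (w j ≠ 0))).card := by omega
  set Z := Finset.univ.filter (fun j => ¬ (w j ≠ 0)) with hZdef
  have hi : (m : ℕ) + 1 ≤ M := m.2
  let f := Finset.orderEmbOfCardLe Z hZ
  have hf : ∀ a, f a ∈ Z := fun a => Finset.orderEmbOfCardLe_mem Z hZ a
  have hdet := hA _ hi f f.strictMono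
  have h0 := Matrix.eq_zero_of_vecMul_eq_zero hdet (v := fun a => v (Fin.castLE hi a)) (by
    funext b
    have hb := hf b
    simp only [hZdef, Finset.mem_filter, Finset.mem_univ, true_and, not_not] at hb
    rw [hw] at hb
    simp only [Matrix.vecMul, dotProduct, Matrix.of_apply, Pi.zero_apply]
    rw [← hb]
    have himg := Finset.sum_map Finset.univ (Fin.castLEEmb hi) (fun l => v l * A l (f b))
    simp only [Fin.castLEEmb_apply] at himg
    rw [← himg]
    apply Finset.sum_subset (Finset.subset_univ _)
    intro x _ hx
    rw [hv x, zero_mul]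
    by_contra hlt
    apply hx
    rw [Finset.mem_map]
    refine ⟨⟨x, by have := Fin.not_lt.mp hlt; have := Fin.le_def.mp this; omega⟩, Finset.mem_univ _, ?_⟩
    ext; simp)
  have := congrFun h0 ⟨m, by omega⟩
  exact hm this

theorem hammingNorm_prod {F : Type} [Field F] [DecidableEq F] {κ ι : Type} [Fintype κ] [Fintype ι]
    (w : κ × ι → F) : hammingNorm w = ∑ i : ι, hammingNorm (fun j : κ => w (j, i)) := by
  classical
  unfold hammingNorm
  simp only [Finset.card_filter]
  rw [Fintype.sum_prod_type, Finset.sum_comm]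

theorem mp_weight {F : Type} [Field F] [Fintype F] [DecidableEq F] {M N : ℕ} {ι : Type} [Fintype ι]
    (A : Matrix (Fin M) (Fin N) F) (hA : IsNSC A) (c : Fin M → ι → F) (m : Fin M)
    (hv : ∀ l, m < l → c l = 0) :
    (N - m) * hammingNorm (c m) ≤ hammingNorm (mpMap A c) := by
  classical
  rw [hammingNorm_prod]
  have h1 : (N - m) * hammingNorm (c m) = ∑ i : ι, (if c m i ≠ 0 then (N - (m:ℕ)) else 0) := by
    rw [← Finset.sum_filter, Finset.sum_const, smul_eq_mul, mul_comm]
    rfl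
  rw [h1]
  apply Finset.sum_le_sum
  intro i _
  split_ifs with h
  · have := nsc_weight A hA (fun l => c l i) m h (fun l hl => by simp [hv l hl])
    have e : (fun j => mpMap A c (j, i)) = fun j : Fin N => ∑ l, c l i * A l j := rfl
    rw [e]
    omega
  · exact Nat.zero_le _

theorem exists_top {F : Type} [Field F] {M : ℕ} {ι : Type} (c : Fin M → ι → F) (hc : c ≠ 0) :
    ∃ m, c m ≠ 0 ∧ ∀ l, m < l → c l = 0 := by
  classical
  obtain ⟨a, ha⟩ := Function.ne_iff.mp hc
  let s := Finset.univ.filter (fun l => c l ≠ 0)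
  have hs : s.Nonempty := ⟨a, by simpa [s] using ha⟩
  refine ⟨s.max' hs, by simpa [s] using s.max'_mem hs, fun l hl => ?_⟩
  by_contra h
  exact absurd (s.le_max' l (by simpa [s] using h)) (not_le.mpr hl)

theorem mp_inj {F : Type} [Field F] [Fintype F] [DecidableEq F] {M N : ℕ} {ι : Type} [Fintype ι]
    (hMN : M < N) (A : Matrix (Fin M) (Fin N) F) (hA : IsNSC A) :
    Function.Injective (mpMap (ι := ι) A) := by
  rw [← LinearMap.ker_eq_bot, LinearMap.ker_eq_bot']
  intro c hc
  by_contra h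
  obtain ⟨m, hm, hl⟩ := exists_top c h
  have := mp_weight A hA c m hl
  rw [hc, hammingNorm_zero] at this
  have h2 : 0 < hammingNorm (c m) := hammingNorm_pos_iff.mpr hm
  have h3 : 0 < N - (m:ℕ) := by have := m.2; omega
  have := Nat.mul_pos h3 h2
  omega

theorem finrank_mp {F : Type} [Field F] [Fintype F] [DecidableEq F] {M N : ℕ} {ι : Type} [Fintype ι]
    (hMN : M < N) (A : Matrix (Fin M) (Fin N) F) (hA : IsNSC A)
    (Cs : Fin M → Submodule F (ι → F)) :
    Module.finrank F ↥(matrixProductCode Cs A) = ∑ l, Module.finrank F ↥(Cs l) := by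
  unfold matrixProductCode
  rw [← (Submodule.equivMapOfInjective _ (mp_inj hMN A hA) _).finrank_eq]
  let E : ↥(Submodule.pi Set.univ Cs) ≃ₗ[F] (∀ l, ↥(Cs l)) :=
    { toFun := fun x l => ⟨x.1 l, x.2 l (Set.mem_univ _)⟩
      invFun := fun y => ⟨fun l => (y l).1, fun l _ => (y l).2⟩
      map_add' := fun _ _ => rfl
      map_smul' := fun _ _ => rfl
      left_inv := fun _ => rfl
      right_inv := fun _ => rfl }
  rw [E.finrank_eq, Module.finrank_pi_fintype]

/-- existence of a low weight combination -/
theorem exists_comb {F : Type} [Field F] [Fintype F] [DecidableEq F] {M N : ℕ}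
    (hM : 1 < M) (hMN : M < N) (A : Matrix (Fin M) (Fin N) F) (hA : IsNSC A) :
    ∃ v : Fin M → F, hammingNorm (fun j : Fin N => ∑ l, v l * A l j) = N - M + 1 := by
  let φ : (Fin M → F) →ₗ[F] (Fin (M-1) → F) :=
    Matrix.vecMulLinear (Matrix.of fun (a : Fin M) (b : Fin (M-1)) => A a ⟨b, by omega⟩)
  have hker : LinearMap.ker φ ≠ ⊥ := LinearMap.ker_ne_bot_of_finrank_lt (by simp; omega)
  obtain ⟨v, hv, hv0⟩ := Submodule.exists_mem_ne_zero_of_ne_bot hker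
  refine ⟨v, le_antisymm ?_ ?_⟩
  · have hz : ∀ j : Fin N, (j : ℕ) < M - 1 → ∑ l, v l * A l j = 0 := by
      intro j hj
      have := congrFun (LinearMap.mem_ker.mp hv) ⟨j, hj⟩
      simpa [φ, Matrix.vecMul, dotProduct] using this
    unfold hammingNorm
    calc _ ≤ (Finset.univ.filter (fun j : Fin N => ¬ ((j:ℕ) < M - 1))).card := by
          apply Finset.card_le_card
          intro j
          simp only [Finset.mem_filter, Finset.mem_univ, true_and]
          exact fun h h' => h (hz j h')
      _ ≤ N - M + 1 := by
          have h := Finset.card_filter_add_card_filter_not (s := (Finset.univ : Finset (Fin N))) (fun j : Fin N => (j:ℕ) < M - 1)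
          rw [Fin.card_filter_val_lt] at h
          simp only [Finset.card_univ, Fintype.card_fin] at h
          omega
  · have hc : (fun (l : Fin M) (_ : Unit) => v l) ≠ 0 := by
      intro h; apply hv0; funext l; exact congrFun (congrFun h l) ()
    obtain ⟨m, hm, hl⟩ := exists_top _ hc
    have := nsc_weight A hA v m (fun h => hm (funext fun _ => h)) (fun l h => congrFun (hl l h) ())
    have := m.2
    omega

theorem mp_minDist {F : Type} [Field F] [Fintype F] [DecidableEq F]
    (n δ M N g : ℕ) (hM : 1 < M) (hMN : M < N)
    (C1 CM : Submodule F (Fin n → F)) (hC1d : minWtGe C1 δ) (hδ : 0 < δ)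
    (hCMd : minDistIs CM (δ + g))
    (A : Matrix (Fin M) (Fin N) F) (hA : IsNSC A) (hsub : CM ≤ C1)
    (hg : g * (N - M + 1) ≤ δ) :
    minDistIs (matrixProductCode (fun i : Fin M => if (i : ℕ) < M - 1 then C1 else CM) A)
      ((N - M + 1) * (δ + g)) := by
  constructor
  · obtain ⟨⟨c, hc, hc0, hcw⟩, -⟩ := hCMd
    obtain ⟨v, hv⟩ := exists_comb hM hMN A hA
    have hw : hammingNorm (mpMap A (fun l => v l • c)) = (N - M + 1) * (δ + g) := by
      rw [hammingNorm_prod, ← hcw, ← hv]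
      have h1 : ∀ i, hammingNorm (fun j => mpMap A (fun l => v l • c) (j, i)) =
          if c i ≠ 0 then hammingNorm (fun j : Fin N => ∑ l, v l * A l j) else 0 := by
        intro i
        have e : (fun j => mpMap A (fun l => v l • c) (j, i)) =
            c i • fun j : Fin N => ∑ l, v l * A l j := by
          funext j
          simp only [mpMap, LinearMap.coe_mk, AddHom.coe_mk, Pi.smul_apply, smul_eq_mul,
            Finset.mul_sum]
          exact Finset.sum_congr rfl fun l _ => by ring
        rw [e]
        split_ifs with h
        · exact hammingNorm_smul (fun _ => IsSMulRegular.of_ne_zero h) _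
        · rw [not_not] at h; rw [h, zero_smul, hammingNorm_zero]
      rw [Finset.sum_congr rfl fun i _ => h1 i, ← Finset.sum_filter, Finset.sum_const,
        smul_eq_mul, mul_comm]
      rfl
    refine ⟨_, ⟨fun l => v l • c, ?_, rfl⟩, ?_, hw⟩
    · intro l _
      dsimp only
      split_ifs
      · exact C1.smul_mem _ (hsub hc)
      · exact CM.smul_mem _ hc
    · rw [← hammingNorm_ne_zero_iff, hw]
      positivity
  · rintro _ ⟨c, hc, rfl⟩ h0
    have hc0 : c ≠ 0 := by rintro rfl; exact h0 (map_zero _)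
    obtain ⟨m, hm, hl⟩ := exists_top c hc0
    refine le_trans ?_ (mp_weight A hA c m hl)
    have hcm := hc m (Set.mem_univ _)
    have hm2 := m.2
    dsimp only at hcm
    split_ifs at hcm with h
    · have h1 := hC1d _ hcm hm
      calc (N - M + 1) * (δ + g) ≤ (N - M + 2) * δ := by nlinarith
        _ ≤ _ := Nat.mul_le_mul (by omega) h1
    · have h1 := hCMd.2 _ hcm hm
      exact Nat.mul_le_mul (by omega) h1

theorem mp_isLRC {F : Type} [Field F] [Fintype F] [DecidableEq F]
    (n δ r M N : ℕ) (hn : n ≤ r + δ - 1)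
    (C1 : Submodule F (Fin n → F)) (hC1d : minWtGe C1 δ)
    (Cs : Fin M → Submodule F (Fin n → F)) (hCs : ∀ l, Cs l ≤ C1)
    (A : Matrix (Fin M) (Fin N) F) :
    IsLRC (matrixProductCode Cs A) r δ := by
  rintro ⟨j, i⟩
  let e : Fin n ↪ Fin N × Fin n := ⟨fun i => (j, i), fun a b h => (Prod.ext_iff.mp h).2⟩
  refine ⟨Finset.univ.map e, Finset.mem_map.mpr ⟨i, Finset.mem_univ _, rfl⟩, by simpa using hn, ?_⟩
  rintro _ ⟨_, ⟨c, hc, rfl⟩, rfl⟩ h0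
  let u : Fin n → F := fun i => ∑ l, c l i * A l j
  have hu : u ∈ C1 := by
    have : u = ∑ l, A l j • c l := by
      funext i; simp [u, mul_comm]
    rw [this]
    exact Submodule.sum_mem _ fun l _ => C1.smul_mem _ (hCs l (hc l (Set.mem_univ _)))
  have hval : ∀ (x : {x // x ∈ Finset.univ.map e}),
      LinearMap.funLeft F F (fun j : { x // x ∈ Finset.univ.map e } => (j : Fin N × Fin n))
        (mpMap A c) x = u x.1.2 := by
    rintro ⟨⟨a, b⟩, hx⟩
    obtain ⟨b', -, hb⟩ := Finset.mem_map.mp hx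
    obtain ⟨rfl, rfl⟩ := Prod.ext_iff.mp hb
    rfl
  have hu0 : u ≠ 0 := by
    rintro h
    apply h0
    funext x
    rw [hval, h]; rfl
  refine (hC1d u hu hu0).trans ?_
  unfold hammingNorm
  apply Finset.card_le_card_of_injOn (fun i => (⟨e i, by simp⟩ : {x // x ∈ Finset.univ.map e}))
  · intro i hi
    simp only [Finset.coe_filter, Finset.mem_univ, true_and, Set.mem_ofPred_eq] at hi ⊢
    rw [hval]; exact hi
  · intro a _ b _ h
    exact e.injective (Subtype.ext_iff.mp h)

/-- Theorem 1: with `C_1 = ⋯ = C_{M-1}` MDS with parameters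
`[r+δ-1, r, δ]_q`, `C_M ⊆ C_1` MDS with parameters `[r+δ-1, r-g, δ+g]_q`,
`0 ≤ g ≤ δ/(N-M+1)`, `g < r`, and `A` an `M × N` NSC matrix, the matrix-product code
is an optimal `(r,δ)`-LRC if and only if `r = g + 1`. -/
theorem matrixProduct_optimal_iff
    (q : ℕ) (hq : IsPrimePow q)
    (F : Type) [Field F] [Fintype F] [DecidableEq F] (hF : Fintype.card F = q)
    (r δ M N g : ℕ) (hδ : 1 < δ) (hr : 0 < r) (hM : 1 < M) (hMN : M < N) (hNq : N ≤ q)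
    (hgr : g < r)
    (C1 CM : Submodule F (Fin (r + δ - 1) → F))
    (hC1k : Module.finrank F ↥C1 = r) (hC1d : minDistIs C1 δ)
    (hCMk : Module.finrank F ↥CM = r - g) (hCMd : minDistIs CM (δ + g))
    (A : Matrix (Fin M) (Fin N) F) (hA : IsNSC A)
    (hsub : CM ≤ C1)
    (hgδ : (g : ℚ) ≤ (δ : ℚ) / ((N : ℚ) - (M : ℚ) + 1)) :
    IsOptimalLRCCode
        (matrixProductCode (fun i : Fin M => if (i : ℕ) < M - 1 then C1 else CM) A) r δ
      ↔ r = g + 1 := by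
  have hg : g * (N - M + 1) ≤ δ := by
    have hp : (0:ℚ) < (N : ℚ) - (M : ℚ) + 1 := by
      have : (M:ℚ) < N := by exact_mod_cast hMN
      linarith
    rw [le_div_iff₀ hp] at hgδ
    have : ((g * (N - M + 1) : ℕ) : ℚ) ≤ δ := by
      push_cast [Nat.cast_sub hMN.le]; exact hgδ
    exact_mod_cast this
  have hdist := mp_minDist _ δ M N g hM hMN C1 CM hC1d.2 (by omega) hCMd A hA hsub hg
  have hlrc := mp_isLRC _ δ r M N le_rfl C1 hC1d.2
    (fun i : Fin M => if (i : ℕ) < M - 1 then C1 else CM)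
    (fun l => by split_ifs; exacts [le_rfl, hsub]) A
  have hk : Module.finrank F ↥(matrixProductCode
      (fun i : Fin M => if (i : ℕ) < M - 1 then C1 else CM) A) + g = M * r := by
    rw [finrank_mp hMN A hA]
    obtain ⟨M, rfl⟩ : ∃ M', M = M' + 1 := ⟨M - 1, by omega⟩
    rw [Fin.sum_univ_castSucc]
    have h1 : ∀ x : Fin M, Module.finrank F
        ↥(if ((x.castSucc : Fin (M+1)) : ℕ) < M + 1 - 1 then C1 else CM) = r := by
      intro x
      rw [if_pos (by simp), hC1k]
    have h2 : Module.finrank F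
        ↥(if ((Fin.last M : Fin (M+1)) : ℕ) < M + 1 - 1 then C1 else CM) = r - g := by
      rw [if_neg (by simp), hCMk]
    rw [Finset.sum_congr rfl fun x _ => h1 x, h2]
    simp only [Finset.sum_const, Finset.card_univ, Fintype.card_fin, smul_eq_mul, add_mul, one_mul]
    omega
  set D := matrixProductCode (fun i : Fin M => if (i : ℕ) < M - 1 then C1 else CM) A
  set k := Module.finrank F ↥D
  have hceil : ⌈(k : ℚ) / (r : ℚ)⌉ = (M : ℤ) := by
    have hr' : (0:ℚ) < r := by exact_mod_cast hr
    have hk' : (k:ℚ) + g = M * r := by exact_mod_cast hk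
    have hgr' : (g:ℚ) < r := by exact_mod_cast hgr
    have hg0 : (0:ℚ) ≤ g := Nat.cast_nonneg _
    rw [Int.ceil_eq_iff]
    constructor
    · rw [lt_div_iff₀ hr']; push_cast; linarith
    · rw [div_le_iff₀ hr']; push_cast; linarith
  have hbound : optBound (Fintype.card (Fin N × Fin (r + δ - 1))) k r δ =
      (((N - M + 1) * (δ + g) : ℕ) : ℤ) + ((N:ℤ) - M) * ((r:ℤ) - g - 1) := by
    unfold optBound
    rw [hceil]
    have hk' : (k:ℤ) = M * r - g := by
      have : (k:ℤ) + g = M * r := by exact_mod_cast hk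
      linarith
    rw [hk']
    simp only [Fintype.card_prod, Fintype.card_fin]
    push_cast [Nat.cast_sub hMN.le, Nat.cast_sub (show 1 ≤ r + δ by omega)]
    ring
  have hNM : (N:ℤ) - M ≠ 0 := by omega
  constructor
  · rintro ⟨-, d, ⟨⟨c, hc, hc0, hcw⟩, hd2⟩, hd⟩
    have hdd : d = (N - M + 1) * (δ + g) := by
      apply le_antisymm
      · obtain ⟨⟨c', hc', hc0', hcw'⟩, -⟩ := hdist
        rw [← hcw']; exact hd2 _ hc' hc0'
      · rw [← hcw]; exact hdist.2 _ hc hc0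
    rw [hbound, ← hdd] at hd
    have : ((N:ℤ) - M) * ((r:ℤ) - g - 1) = 0 := by linarith
    rcases mul_eq_zero.mp this with h | h
    · exact absurd h hNM
    · omega
  · intro h
    refine ⟨hlrc, _, hdist, ?_⟩
    rw [hbound, h]
    push_cast
    ring


end LRCPaper
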